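/- Let K, T ⊂ ℝ^{2n} be centrally symmetric convex bodies (K = −K, T = −T) and let x ∈ ℝ^{2n} be such that K ∩ (x+T) has nonempty interior. Then K ∩ T has nonempty interior and c(K ∩ (x+T)) ≤ c(K ∩ T). -/

import Mathlib

open MeasureTheory Real Set Filter intervalIntegral Metric
open scoped InnerProductSpace Topology Pointwise

noncomputable section

/-- The phase space `ℝ^{2n}`. -/
abbrev E (n : ℕ) := EuclideanSpace ℝ (Fin (2 * n))

/-- The standard complex structure `J` on `ℝ^{2n}`, given in coordinates
`(x₁,y₁,…,xₙ,yₙ)` by `J(x₁,y₁,…,xₙ,yₙ) = (−y₁,x₁,…,−yₙ,xₙ)`. -/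
def Jmap (n : ℕ) (v : E n) : E n := WithLp.toLp 2 fun i =>
  if _h : i.val % 2 = 0 then -v ⟨i.val + 1, by have := i.isLt; omega⟩
  else v ⟨i.val - 1, by have := i.isLt; omega⟩

/-- The support function `h_K(u) = sup_{x ∈ K} ⟨x, u⟩`. -/
def suppFn (n : ℕ) (K : Set (E n)) (u : E n) : ℝ :=
  sSup ((fun x => ⟪x, u⟫_ℝ) '' K)

/-- A convex body: a compact convex set with nonempty interior. -/
def IsConvexBody (n : ℕ) (K : Set (E n)) : Prop :=
  IsCompact K ∧ Convex ℝ K ∧ (interior K).Nonempty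

/-- Membership in the loop space `𝓔_p`: the pair `(z, dz)` represents an absolutely
continuous `2π`-periodic loop `z` with derivative `dz ∈ L^p([0,2π])`, mean zero and
normalized action `(1/2)∫₀^{2π} ⟨J z, ż⟩ = 1`. -/
def InE (n : ℕ) (p : ℝ) (z dz : ℝ → E n) : Prop :=
  Function.Periodic z (2 * π) ∧
  (∀ a b : ℝ, IntervalIntegrable dz volume a b) ∧
  (∀ t, z t = z 0 + ∫ s in (0:ℝ)..t, dz s) ∧
  MemLp dz (ENNReal.ofReal p) (volume.restrict (Set.Ioc (0:ℝ) (2 * π))) ∧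
  (∫ t in (0:ℝ)..(2 * π), z t) = 0 ∧
  (1 / 2) * ∫ t in (0:ℝ)..(2 * π), ⟪Jmap n (z t), dz t⟫_ℝ = 1

/-- The (Ekeland–Hofer–Zehnder) capacity of a convex body,
`c(S) = (π · inf_{z ∈ 𝓔₂} (1/2π) ∫₀^{2π} h_S(ż(t)) dt)²`. -/
def capacity (n : ℕ) (S : Set (E n)) : ℝ :=
  (π * sInf { r : ℝ | ∃ z dz : ℝ → E n, InE n 2 z dz ∧
      r = (1 / (2 * π)) * ∫ t in (0:ℝ)..(2 * π), suppFn n S (dz t) }) ^ 2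

/-- The action `𝒜(γ) = (1/2) ∫₀^{T₀} ⟨−Jγ̇(t), γ(t)⟩ dt` of a `T₀`-periodic curve. -/
def action (n : ℕ) (γ : ℝ → E n) (T₀ : ℝ) : ℝ :=
  (1 / 2) * ∫ t in (0:ℝ)..T₀, ⟪-Jmap n (deriv γ t), γ t⟫_ℝ

/-- A closed characteristic on `∂K`: a nonconstant `T₀`-periodic `C¹` curve lying on
`∂K` satisfying `γ̇ = d·J∇F(γ)` for some `d > 0`, where `F = ‖·‖_K²`. -/
def IsClosedCharacteristic (n : ℕ) (K : Set (E n)) (γ : ℝ → E n) (T₀ : ℝ) : Prop :=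
  0 < T₀ ∧ Function.Periodic γ T₀ ∧ ContDiff ℝ 1 γ ∧ (∃ s t, γ s ≠ γ t) ∧
  (∀ t, γ t ∈ frontier K) ∧
  ∃ d : ℝ, 0 < d ∧ ∀ t, deriv γ t = d • Jmap n (gradient (fun x => gauge K x ^ 2) (γ t))

/-- A capacity carrier of `K`: a closed characteristic on `∂K` of minimal action. -/
def IsCapacityCarrier (n : ℕ) (K : Set (E n)) (γ : ℝ → E n) (T₀ : ℝ) : Prop :=
  IsClosedCharacteristic n K γ T₀ ∧
  ∀ γ' T₀', IsClosedCharacteristic n K γ' T₀' → action n γ T₀ ≤ action n γ' T₀'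

/-- The minimal action of a closed characteristic on `∂K`. -/
def minAction (n : ℕ) (K : Set (E n)) : ℝ :=
  sInf { a : ℝ | ∃ γ T₀, IsClosedCharacteristic n K γ T₀ ∧ a = action n γ T₀ }

/-- `K` has smooth boundary: its gauge function is `C¹` away from the origin. -/
def HasSmoothBoundary (n : ℕ) (K : Set (E n)) : Prop :=
  ContDiffOn ℝ 1 (gauge K) {(0 : E n)}ᶜ

/-- The `p`-sum `K +ₚ T` of Firey: the convex body with support function
`(h_K^p + h_T^p)^{1/p}`. -/
def pSum (n : ℕ) (p : ℝ) (K T : Set (E n)) : Set (E n) :=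
  { x | ∀ u, ⟪x, u⟫_ℝ ≤ (suppFn n K u ^ p + suppFn n T u ^ p) ^ (1 / p) }

/-- The polar body `T° = {x : ⟨x,y⟩ ≤ 1 for all y ∈ T}`. -/
def polarBody (n : ℕ) (T : Set (E n)) : Set (E n) :=
  { x | ∀ y ∈ T, ⟪x, y⟫_ℝ ≤ 1 }

/-- The length `∫₀^{T₀} ‖γ̇(t)‖_B dt` of a curve measured with the gauge of `B`. -/
def lengthIn (n : ℕ) (B : Set (E n)) (γ : ℝ → E n) (T₀ : ℝ) : ℝ :=
  ∫ t in (0:ℝ)..T₀, gauge B (deriv γ t)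

/-- Critical point of the functional `I_p(z) = ∫₀^{2π} h_K^p(ż(t)) dt` on `𝓔_p`. -/
def IsCriticalPoint (n : ℕ) (p : ℝ) (K : Set (E n)) (z dz : ℝ → E n) : Prop :=
  ∀ ξ dξ : ℝ → E n,
    Function.Periodic ξ (2 * π) →
    (∀ a b : ℝ, IntervalIntegrable dξ volume a b) →
    (∀ t, ξ t = ξ 0 + ∫ s in (0:ℝ)..t, dξ s) →
    MemLp dξ (ENNReal.ofReal p) (volume.restrict (Set.Ioc (0:ℝ) (2 * π))) →
    (∫ t in (0:ℝ)..(2 * π), ξ t) = 0 →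
    (∫ t in (0:ℝ)..(2 * π), ⟪ξ t, Jmap n (dz t)⟫_ℝ) = 0 →
    (∫ t in (0:ℝ)..(2 * π), ⟪gradient (fun u => suppFn n K u ^ p) (dz t), dξ t⟫_ℝ) = 0

/-- The rotation-invariant probability measure on the unit sphere of `ℝ^{2n}`. -/
def sphereMeasure (n : ℕ) : Measure (sphere (0 : E n) 1) :=
  ((volume : Measure (E n)).toSphere Set.univ)⁻¹ • (volume : Measure (E n)).toSphere

/-- The mean width parameter `M*(K) = ∫_{S^{2n-1}} h_K dσ`. -/
def meanWidth (n : ℕ) (K : Set (E n)) : ℝ :=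
  ∫ x : sphere (0 : E n) 1, suppFn n K (x : E n) ∂(sphereMeasure n)

/-! The central symmetrization `A ↦ (A - A) / 2` replaces the support function `h_A(u)` by the
average of `h_A(u)` and `h_A(-u)`. The loop space is invariant under `z ↦ -z`, and the `A`-lengths
of `z` and `-z` average to the length of `z` for the symmetrization; hence one of the two loops is
at least as short, and symmetrizing cannot decrease the capacity. Symmetrization forgets
translations and fixes symmetric convex sets, so that of `K ∩ (x + T)` lies in `K ∩ T`. -/

section CentralSymmetrization

variable {V : Type*} [AddCommGroup V] [Module ℝ V] {A B : Set V}

/-- The central symmetrization `(A - A) / 2` of a set, i.e. its difference body scaled by a half so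
that symmetric convex sets are fixed. -/
def centralSymmetrization (A : Set V) : Set V :=
  (1 / 2 : ℝ) • (A - A)

theorem centralSymmetrization_mono (h : A ⊆ B) :
    centralSymmetrization A ⊆ centralSymmetrization B :=
  smul_set_mono (sub_subset_sub h h)

theorem centralSymmetrization_nonempty (h : A.Nonempty) : (centralSymmetrization A).Nonempty :=
  (h.sub h).smul_set

theorem centralSymmetrization_image_add_left (x : V) (A : Set V) :
    centralSymmetrization ((fun y => x + y) '' A) = centralSymmetrization A := by
  simp only [centralSymmetrization, ← singleton_add, add_sub_add_comm, singleton_sub_singleton,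
    sub_self, singleton_zero, zero_add]

theorem centralSymmetrization_eq_self (hA : Convex ℝ A) (hsymm : A = -A) :
    centralSymmetrization A = A :=
  calc (1 / 2 : ℝ) • (A - A) = (1 / 2 : ℝ) • ((1 : ℝ) • A + (1 : ℝ) • A) := by
        rw [one_smul, sub_eq_add_neg, ← hsymm]
    _ = (1 / 2 : ℝ) • ((1 + 1 : ℝ) • A) := by rw [hA.add_smul zero_le_one zero_le_one]
    _ = A := by rw [smul_smul]; norm_num

theorem centralSymmetrization_inter_translate_subset {K T : Set V} (hK : Convex ℝ K)
    (hT : Convex ℝ T) (hKsym : K = -K) (hTsym : T = -T) (x : V) :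
    centralSymmetrization (K ∩ ((fun y => x + y) '' T)) ⊆ K ∩ T := by
  refine subset_inter ?_ ?_
  · exact (centralSymmetrization_mono inter_subset_left).trans
      (centralSymmetrization_eq_self hK hKsym).subset
  · exact (centralSymmetrization_mono inter_subset_right).trans
      (by rw [centralSymmetrization_image_add_left, centralSymmetrization_eq_self hT hTsym])

theorem interior_centralSymmetrization_nonempty [TopologicalSpace V] [IsTopologicalAddGroup V]
    [ContinuousConstSMul ℝ V] (h : (interior A).Nonempty) :
    (interior (centralSymmetrization A)).Nonempty := by
  rw [centralSymmetrization, interior_smul₀ (by norm_num)]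
  exact ((h.sub (h.mono interior_subset)).mono subset_interior_sub_left).smul_set

end CentralSymmetrization

theorem isBounded_of_isBounded_centralSymmetrization {V : Type*} [SeminormedAddCommGroup V]
    [NormedSpace ℝ V] {A : Set V} (h : Bornology.IsBounded (centralSymmetrization A)) :
    Bornology.IsBounded A := by
  rcases A.eq_empty_or_nonempty with rfl | ⟨a, ha⟩
  · exact Bornology.isBounded_empty
  have hdiff : Bornology.IsBounded (A - A) := by
    simpa [centralSymmetrization, smul_smul] using h.smul₀ (2 : ℝ)
  exact (hdiff.add Bornology.isBounded_singleton).subset fun x hx =>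
    ⟨x - a, sub_mem_sub hx ha, a, mem_singleton a, sub_add_cancel x a⟩

section SupportFunction

variable {n : ℕ} {A B : Set (E n)}

theorem suppFn_eq_sSup_image_innerSL (A : Set (E n)) (u : E n) :
    suppFn n A u = sSup (innerSL ℝ u '' A) :=
  congrArg sSup (image_congr fun a _ => real_inner_comm u a)

theorem bddAbove_image_innerSL (hA : Bornology.IsBounded A) (u : E n) :
    BddAbove (innerSL ℝ u '' A) :=
  ((innerSL ℝ u).lipschitz.isBounded_image hA).bddAbove

theorem inner_le_suppFn (hA : Bornology.IsBounded A) {a : E n} (ha : a ∈ A) (u : E n) :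
    ⟪a, u⟫_ℝ ≤ suppFn n A u := by
  rw [suppFn_eq_sSup_image_innerSL, real_inner_comm]
  exact le_csSup (bddAbove_image_innerSL hA u) (mem_image_of_mem _ ha)

theorem suppFn_le (hA : A.Nonempty) {u : E n} {c : ℝ} (h : ∀ a ∈ A, ⟪a, u⟫_ℝ ≤ c) :
    suppFn n A u ≤ c :=
  csSup_le (hA.image _) (forall_mem_image.2 h)

theorem suppFn_mono (hA : A.Nonempty) (hB : Bornology.IsBounded B) (h : A ⊆ B) (u : E n) :
    suppFn n A u ≤ suppFn n B u :=
  suppFn_le hA fun _ ha => inner_le_suppFn hB (h ha) u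

theorem suppFn_zero_right (hA : A.Nonempty) : suppFn n A 0 = 0 := by
  simp [suppFn, hA.image_const]

theorem suppFn_neg_left (A : Set (E n)) (u : E n) : suppFn n (-A) u = suppFn n A (-u) := by
  simp [suppFn, ← image_neg_eq_neg, image_image]

theorem suppFn_add_left (hA : A.Nonempty) (hA' : Bornology.IsBounded A) (hB : B.Nonempty)
    (hB' : Bornology.IsBounded B) (u : E n) :
    suppFn n (A + B) u = suppFn n A u + suppFn n B u := by
  simp only [suppFn_eq_sSup_image_innerSL, image_add]
  exact csSup_add (hA.image _) (bddAbove_image_innerSL hA' u) (hB.image _)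
    (bddAbove_image_innerSL hB' u)

theorem suppFn_smul_left {c : ℝ} (hc : 0 ≤ c) (A : Set (E n)) (u : E n) :
    suppFn n (c • A) u = c * suppFn n A u := by
  simp only [suppFn_eq_sSup_image_innerSL, image_smul_set, Real.sSup_smul_of_nonneg hc, smul_eq_mul]

theorem suppFn_centralSymmetrization (hA : A.Nonempty) (hA' : Bornology.IsBounded A) (u : E n) :
    suppFn n (centralSymmetrization A) u = 1 / 2 * (suppFn n A u + suppFn n A (-u)) := by
  rw [centralSymmetrization, suppFn_smul_left (by norm_num), sub_eq_add_neg,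
    suppFn_add_left hA hA' hA.neg hA'.neg, suppFn_neg_left]

theorem lipschitzWith_suppFn (hA : A.Nonempty) {R : NNReal} (hR : ∀ a ∈ A, ‖a‖ ≤ R) :
    LipschitzWith R (suppFn n A) := by
  have hbdd : Bornology.IsBounded A := isBounded_iff_forall_norm_le.2 ⟨R, hR⟩
  refine LipschitzWith.of_le_add_mul _ fun u v => suppFn_le hA fun a ha => ?_
  calc ⟪a, u⟫_ℝ = ⟪a, v⟫_ℝ + ⟪a, u - v⟫_ℝ := by rw [inner_sub_right]; ring
    _ ≤ suppFn n A v + ‖a‖ * ‖u - v‖ :=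
        add_le_add (inner_le_suppFn hbdd ha v) (real_inner_le_norm a (u - v))
    _ ≤ suppFn n A v + R * dist u v := by
        rw [dist_eq_norm]
        gcongr
        exact hR a ha

theorem integrable_suppFn_comp {X : Type*} [MeasurableSpace X] {μ : Measure X} {f : X → E n}
    (hA : A.Nonempty) (hA' : Bornology.IsBounded A) (hf : Integrable f μ) :
    Integrable (fun t => suppFn n A (f t)) μ := by
  obtain ⟨R, hRpos, hR⟩ := hA'.exists_pos_norm_le
  lift R to NNReal using hRpos.le
  rw [← memLp_one_iff_integrable] at hf ⊢
  exact (lipschitzWith_suppFn hA hR).comp_memLp (suppFn_zero_right hA) hf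

theorem intervalIntegrable_suppFn_comp {f : ℝ → E n} {a b : ℝ} (hA : A.Nonempty)
    (hA' : Bornology.IsBounded A) (hf : IntervalIntegrable f volume a b) :
    IntervalIntegrable (fun t => suppFn n A (f t)) volume a b :=
  ⟨integrable_suppFn_comp hA hA' hf.1, integrable_suppFn_comp hA hA' hf.2⟩

end SupportFunction

section MeanSupport

variable {n : ℕ} {A B : Set (E n)} {dz : ℝ → E n}

/-- The functional `(1/2π) ∫₀^{2π} h_A(ż(t)) dt` minimized in the definition of the capacity, as a
function of the velocity `ż` alone. -/
def meanSupport (n : ℕ) (A : Set (E n)) (dz : ℝ → E n) : ℝ :=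
  (1 / (2 * π)) * ∫ t in (0 : ℝ)..(2 * π), suppFn n A (dz t)

theorem meanSupport_mono (hA : A.Nonempty) (hB : Bornology.IsBounded B) (h : A ⊆ B)
    (hdz : IntervalIntegrable dz volume 0 (2 * π)) : meanSupport n A dz ≤ meanSupport n B dz :=
  mul_le_mul_of_nonneg_left
    (integral_mono_on two_pi_pos.le (intervalIntegrable_suppFn_comp hA (hB.subset h) hdz)
      (intervalIntegrable_suppFn_comp (hA.mono h) hB hdz) fun t _ => suppFn_mono hA hB h (dz t))
    (by positivity)

theorem meanSupport_centralSymmetrization (hA : A.Nonempty) (hA' : Bornology.IsBounded A)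
    (hdz : IntervalIntegrable dz volume 0 (2 * π)) :
    meanSupport n (centralSymmetrization A) dz =
      1 / 2 * (meanSupport n A dz + meanSupport n A (-dz)) := by
  simp only [meanSupport, suppFn_centralSymmetrization hA hA', ← Pi.neg_apply (f := dz)]
  rw [intervalIntegral.integral_const_mul,
    intervalIntegral.integral_add (intervalIntegrable_suppFn_comp hA hA' hdz)
      (intervalIntegrable_suppFn_comp hA hA' hdz.neg)]
  ring

theorem meanSupport_nonneg (hA : A.Nonempty) (hA' : Bornology.IsBounded A)
    (hdz : IntervalIntegrable dz volume 0 (2 * π)) (hclosed : ∫ t in (0 : ℝ)..(2 * π), dz t = 0) :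
    0 ≤ meanSupport n A dz := by
  obtain ⟨a, ha⟩ := hA
  have hzero : ∫ t in (0 : ℝ)..(2 * π), ⟪a, dz t⟫_ℝ = 0 := by
    simpa [hclosed] using (innerSL ℝ a).intervalIntegral_comp_comm hdz
  have hinner : IntervalIntegrable (fun t => ⟪a, dz t⟫_ℝ) volume 0 (2 * π) :=
    ⟨hdz.1.const_inner a, hdz.2.const_inner a⟩
  refine mul_nonneg (by positivity) (hzero.ge.trans ?_)
  exact integral_mono_on two_pi_pos.le hinner (intervalIntegrable_suppFn_comp ⟨a, ha⟩ hA' hdz)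
    fun t _ => inner_le_suppFn hA' ha (dz t)

end MeanSupport

theorem Jmap_neg (n : ℕ) (v : E n) : Jmap n (-v) = -Jmap n v := by
  ext i
  simp only [Jmap, PiLp.neg_apply]
  split_ifs <;> rfl

namespace InE

variable {n : ℕ} {p : ℝ} {z dz : ℝ → E n}

theorem neg (h : InE n p z dz) : InE n p (-z) (-dz) := by
  obtain ⟨hper, hint, hprim, hLp, hmean, hact⟩ := h
  refine ⟨fun t => congrArg Neg.neg (hper t), fun a b => (hint a b).neg, fun t => ?_,
    hLp.neg, ?_, ?_⟩
  · simp only [Pi.neg_apply, intervalIntegral.integral_neg, hprim t, neg_add]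
  · simp only [Pi.neg_apply, intervalIntegral.integral_neg, hmean, neg_zero]
  · simpa only [Pi.neg_apply, Jmap_neg, inner_neg_neg] using hact

theorem integral_velocity_eq_zero (h : InE n p z dz) : ∫ t in (0 : ℝ)..(2 * π), dz t = 0 := by
  obtain ⟨hper, -, hprim, -⟩ := h
  have hend : z 0 + ∫ t in (0 : ℝ)..(2 * π), dz t = z 0 := by rw [← hprim, hper.eq]
  simpa using hend

end InE

section Capacity

variable {n : ℕ} {A B : Set (E n)}

/-- The loop space `𝓔_p`, each loop being recorded together with its velocity. -/
def loopSpace (n : ℕ) (p : ℝ) : Set ((ℝ → E n) × (ℝ → E n)) :=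
  {w | InE n p w.1 w.2}

theorem capacity_eq_iInf (n : ℕ) (A : Set (E n)) :
    capacity n A = (π * ⨅ w : loopSpace n 2, meanSupport n A w.1.2) ^ 2 := by
  rw [capacity, iInf]
  congr 3
  ext r
  simp [loopSpace, meanSupport, eq_comm]

theorem capacity_le_capacity_of_forall_exists (hA : A.Nonempty) (hA' : Bornology.IsBounded A)
    (h : ∀ z dz, InE n 2 z dz → ∃ w dw, InE n 2 w dw ∧ meanSupport n A dw ≤ meanSupport n B dz) :
    capacity n A ≤ capacity n B := by
  have hnonneg (w : loopSpace n 2) : 0 ≤ meanSupport n A w.1.2 :=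
    meanSupport_nonneg hA hA' (w.2.2.1 _ _) w.2.integral_velocity_eq_zero
  rw [capacity_eq_iInf, capacity_eq_iInf]
  gcongr ?_ ^ 2
  · exact mul_nonneg pi_pos.le (Real.iInf_nonneg hnonneg)
  gcongr π * ?_
  cases isEmpty_or_nonempty (loopSpace n 2)
  · simp only [Real.iInf_of_isEmpty, le_refl]
  refine le_ciInf fun ⟨⟨z, dz⟩, hz⟩ => ?_
  obtain ⟨w, dw, hw, hle⟩ := h z dz hz
  exact (ciInf_le ⟨0, forall_mem_range.2 hnonneg⟩ ⟨(w, dw), hw⟩).trans hle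

theorem capacity_mono (hA : A.Nonempty) (hB : Bornology.IsBounded B) (h : A ⊆ B) :
    capacity n A ≤ capacity n B :=
  capacity_le_capacity_of_forall_exists hA (hB.subset h) fun z dz hz =>
    ⟨z, dz, hz, meanSupport_mono hA hB h (hz.2.1 _ _)⟩

theorem capacity_le_capacity_centralSymmetrization (hA : A.Nonempty)
    (hA' : Bornology.IsBounded A) : capacity n A ≤ capacity n (centralSymmetrization A) := by
  refine capacity_le_capacity_of_forall_exists hA hA' fun z dz hz => ?_
  rw [meanSupport_centralSymmetrization hA hA' (hz.2.1 _ _)]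
  rcases le_total (meanSupport n A dz) (meanSupport n A (-dz)) with hle | hle
  · exact ⟨z, dz, hz, by linarith⟩
  · exact ⟨-z, -dz, hz.neg, by linarith⟩

end Capacity

theorem capacity_inter_translate_le_general (n : ℕ) (K T : Set (E n))
    (hK : Convex ℝ K) (hT : Convex ℝ T) (hKT : Bornology.IsBounded (K ∩ T))
    (hKsym : K = -K) (hTsym : T = -T) (x : E n)
    (hne : (interior (K ∩ ((fun y => x + y) '' T))).Nonempty) :
    (interior (K ∩ T)).Nonempty ∧
      capacity n (K ∩ ((fun y => x + y) '' T)) ≤ capacity n (K ∩ T) := by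
  have hsub := centralSymmetrization_inter_translate_subset hK hT hKsym hTsym x
  have hne' := hne.mono interior_subset
  have hbdd := isBounded_of_isBounded_centralSymmetrization (hKT.subset hsub)
  refine ⟨(interior_centralSymmetrization_nonempty hne).mono (interior_mono hsub), ?_⟩
  exact (capacity_le_capacity_centralSymmetrization hne' hbdd).trans
    (capacity_mono (centralSymmetrization_nonempty hne') hKT hsub)

/-- For centrally symmetric convex bodies `K, T`, `c(K ∩ (x+T)) ≤ c(K ∩ T)`. -/
theorem capacity_inter_translate_le (n : ℕ) (K T : Set (E n))
    (hK : IsConvexBody n K) (hT : IsConvexBody n T)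
    (hKsym : K = -K) (hTsym : T = -T) (x : E n)
    (hne : (interior (K ∩ ((fun y => x + y) '' T))).Nonempty) :
    (interior (K ∩ T)).Nonempty ∧
      capacity n (K ∩ ((fun y => x + y) '' T)) ≤ capacity n (K ∩ T) :=
  capacity_inter_translate_le_general n K T hK.2.1 hT.2.1
    (hK.1.isBounded.subset inter_subset_left) hKsym hTsym x hne
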